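/- arXiv:1810.03224 — 6 statements merged into one kernel-verified Lean document; each statement's English description precedes it below -/
import Mathlib

section
/- Let f ∈ E be an edge with b_fᵀ L_G⁺ b_f < r_f (equivalently, G with f deleted is still connected), and let L' := L_G − (1/r_f)·b_f b_fᵀ be the Laplacian of G with f deleted, with Moore–Penrose pseudoinverse (L')⁺. Then for all d₁, d₂ ∈ ℝ^V with d₁ᵀ1 = d₂ᵀ1 = 0: d₁ᵀ (L')⁺ d₂ = d₁ᵀ L_G⁺ d₂ + (d₁ᵀ L_G⁺ b_f)(b_fᵀ L_G⁺ d₂)/(r_f − b_fᵀ L_G⁺ b_f). -/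
open Matrix BigOperators

/-- `B` is the Moore–Penrose pseudoinverse of `A`. -/
def IsMoorePenrose {ι : Type*} [Fintype ι] [DecidableEq ι] (A B : Matrix ι ι ℝ) : Prop :=
  A * B * A = A ∧ B * A * B = B ∧ (A * B)ᵀ = A * B ∧ (B * A)ᵀ = B * A

theorem stmt_7
    {V : Type*} {E : Type*} [Fintype V] [DecidableEq V] [Fintype E] [DecidableEq E]
    [Nonempty E]
    (w : E → ℝ) (hw : ∀ e, 0 < w e)
    (B : Matrix E V ℝ)
    (hB : ∀ e : E, ∃ u v : V, u ≠ v ∧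
      B e = fun x => (if x = u then (1 : ℝ) else 0) - (if x = v then 1 else 0))
    (L : Matrix V V ℝ) (hL : L = Bᵀ * Matrix.diagonal w * B)
    (hconn : ∀ x : V → ℝ, L.mulVec x = 0 ↔ ∃ c : ℝ, x = fun _ => c)
    (Lplus : Matrix V V ℝ) (hLplus : IsMoorePenrose L Lplus)
    (f : E) (rf : ℝ) (hrf : rf = 1 / w f)
    (hlev : B f ⬝ᵥ Lplus.mulVec (B f) < rf)
    (L' : Matrix V V ℝ) (hL' : L' = L - (1 / rf) • Matrix.vecMulVec (B f) (B f))
    (L'plus : Matrix V V ℝ) (hL'plus : IsMoorePenrose L' L'plus) :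
    ∀ d₁ d₂ : V → ℝ, (∑ a, d₁ a) = 0 → (∑ a, d₂ a) = 0 →
      d₁ ⬝ᵥ L'plus.mulVec d₂ =
        d₁ ⬝ᵥ Lplus.mulVec d₂ +
          (d₁ ⬝ᵥ Lplus.mulVec (B f)) * (B f ⬝ᵥ Lplus.mulVec d₂) /
            (rf - B f ⬝ᵥ Lplus.mulVec (B f)) := by
  classical
  have hw0 := hw f
  have hrf0 : rf ≠ 0 := by rw [hrf]; positivity
  have hLs : Lᵀ = L := by
    rw [hL]; simp [Matrix.transpose_mul, Matrix.mul_assoc]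
  have hL's : L'ᵀ = L' := by
    rw [hL', Matrix.transpose_sub, hLs, Matrix.transpose_smul, Matrix.transpose_vecMulVec]
  have h1 : L *ᵥ (fun _ => (1:ℝ)) = 0 := (hconn _).2 ⟨1, rfl⟩
  obtain ⟨a1, a2, a3, a4⟩ := hLplus
  obtain ⟨c1, c2, c3, c4⟩ := hL'plus
  have hLP : L * (L * Lplus) = L := by
    have := congrArg Matrix.transpose a1
    rwa [Matrix.transpose_mul, a3, hLs] at this
  have key : ∀ d : V → ℝ, (∑ a, d a) = 0 → L *ᵥ (Lplus *ᵥ d) = d := by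
    intro d hd
    have hk : L *ᵥ (d - L *ᵥ (Lplus *ᵥ d)) = 0 := by
      rw [Matrix.mulVec_sub, Matrix.mulVec_mulVec, Matrix.mulVec_mulVec, Matrix.mul_assoc, hLP,
        sub_self]
    obtain ⟨c, hc⟩ := (hconn _).1 hk
    have h0 : (fun _ => c) ⬝ᵥ (d - L *ᵥ (Lplus *ᵥ d)) = 0 := by
      have hz : (fun _ : V => c) ᵥ* L = 0 := by
        rw [← hLs, Matrix.vecMul_transpose]
        exact (hconn _).2 ⟨c, rfl⟩
      rw [dotProduct_sub, Matrix.dotProduct_mulVec, hz, zero_dotProduct, sub_zero]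
      simp [dotProduct, ← Finset.mul_sum, hd]
    rw [← hc] at h0
    exact (sub_eq_zero.1 (dotProduct_self_eq_zero.1 h0)).symm
  have hb : ∑ a, B f a = 0 := by
    obtain ⟨u, v, _, h⟩ := hB f
    rw [h]; simp
  set b := B f with hbdef
  set t := b ⬝ᵥ Lplus *ᵥ b with ht
  have htr : rf - t ≠ 0 := (sub_pos.2 hlev).ne'
  have key' : ∀ d : V → ℝ, (∑ a, d a) = 0 →
      L' *ᵥ (Lplus *ᵥ d + ((b ⬝ᵥ Lplus *ᵥ d) / (rf - t)) • (Lplus *ᵥ b)) = d := by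
    intro d hd
    rw [hL', Matrix.sub_mulVec, Matrix.mulVec_add, Matrix.mulVec_smul, key d hd, key b hb,
      Matrix.smul_mulVec, Matrix.vecMulVec_mulVec, dotProduct_add, dotProduct_smul, ← ht]
    ext x
    simp
    field_simp
    ring
  have hQ : L'plus * L' * L' = L' := by
    have := congrArg Matrix.transpose c1
    rw [Matrix.mul_assoc, Matrix.transpose_mul, c4, hL's] at this
    exact this
  intro d₁ d₂ hd₁ hd₂
  have e1 : (L'plus * L') *ᵥ d₁ = d₁ := by
    rw [← key' d₁ hd₁, Matrix.mulVec_mulVec, hQ]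
  have e2 : d₁ ᵥ* (L'plus * L') = d₁ := by
    rw [← c4, Matrix.vecMul_transpose, e1]
  conv_lhs => rw [← key' d₂ hd₂]
  rw [Matrix.mulVec_mulVec, Matrix.dotProduct_mulVec, e2, dotProduct_add, dotProduct_smul,
    smul_eq_mul]
  ring
end

section
/- Let f = {u,v} ∈ E with u ≠ v, let V' be the vertex set obtained from V by identifying u and v to a single vertex, and let P ∈ ℝ^{V'×V} be the 0–1 matrix with P_{z,y} = 1 if and only if z is the image of y under this identification. Let L_{G/f} := P L_G Pᵀ (the Laplacian of G with f contracted), with Moore–Penrose pseudoinverse (L_{G/f})⁺. Then for all d₁, d₂ ∈ ℝ^V with d₁ᵀ1 = d₂ᵀ1 = 0: (P d₁)ᵀ (L_{G/f})⁺ (P d₂) = d₁ᵀ L_G⁺ d₂ − (d₁ᵀ L_G⁺ b_f)(b_fᵀ L_G⁺ d₂)/(b_fᵀ L_G⁺ b_f). -/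
open Matrix BigOperators

theorem stmt_8
    {V : Type*} {E : Type*} {V' : Type*}
    [Fintype V] [DecidableEq V] [Fintype E] [DecidableEq E] [Fintype V'] [DecidableEq V']
    [Nonempty E]
    (w : E → ℝ) (hw : ∀ e, 0 < w e)
    (B : Matrix E V ℝ)
    (hB : ∀ e : E, ∃ u v : V, u ≠ v ∧
      B e = fun x => (if x = u then (1 : ℝ) else 0) - (if x = v then 1 else 0))
    (L : Matrix V V ℝ) (hL : L = Bᵀ * Matrix.diagonal w * B)
    (hconn : ∀ x : V → ℝ, L.mulVec x = 0 ↔ ∃ c : ℝ, x = fun _ => c)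
    (Lplus : Matrix V V ℝ) (hLplus : IsMoorePenrose L Lplus)
    (f : E) (u v : V) (huv : u ≠ v)
    (hBf : B f = fun x => (if x = u then (1 : ℝ) else 0) - (if x = v then 1 else 0))
    (φ : V → V') (hsurj : Function.Surjective φ) (hφuv : φ u = φ v)
    (hφinj : ∀ a b : V, φ a = φ b → a = b ∨ (a = u ∧ b = v) ∨ (a = v ∧ b = u))
    (P : Matrix V' V ℝ)
    (hP : P = Matrix.of fun (z : V') (y : V) => if z = φ y then (1 : ℝ) else 0)
    (Lc : Matrix V' V' ℝ) (hLc : Lc = P * L * Pᵀ)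
    (Lcplus : Matrix V' V' ℝ) (hLcplus : IsMoorePenrose Lc Lcplus) :
    ∀ d₁ d₂ : V → ℝ, (∑ a, d₁ a) = 0 → (∑ a, d₂ a) = 0 →
      P.mulVec d₁ ⬝ᵥ Lcplus.mulVec (P.mulVec d₂) =
        d₁ ⬝ᵥ Lplus.mulVec d₂ -
          (d₁ ⬝ᵥ Lplus.mulVec (B f)) * (B f ⬝ᵥ Lplus.mulVec d₂) /
            (B f ⬝ᵥ Lplus.mulVec (B f)) := by
  obtain ⟨h1, h2, h3, h4⟩ := hLplus
  obtain ⟨k1, k2, k3, k4⟩ := hLcplus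
  have hLs : Lᵀ = L := by
    rw [hL]; simp [Matrix.transpose_mul, Matrix.mul_assoc]
  have hLcs : Lcᵀ = Lc := by
    rw [hLc]; simp [Matrix.transpose_mul, Matrix.mul_assoc, hLs]
  have hLLp : L * (L * Lplus) = L := by
    have := congrArg Matrix.transpose h1
    rw [Matrix.transpose_mul, h3, hLs] at this
    exact this
  have hsymm : ∀ x y : V → ℝ, L *ᵥ x ⬝ᵥ y = x ⬝ᵥ L *ᵥ y := by
    intro x y
    rw [Matrix.dotProduct_mulVec, ← Matrix.mulVec_transpose, hLs]
  have hsymmc : ∀ x y : V' → ℝ, Lc *ᵥ x ⬝ᵥ y = x ⬝ᵥ Lc *ᵥ y := by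
    intro x y
    rw [Matrix.dotProduct_mulVec, ← Matrix.mulVec_transpose, hLcs]
  have hsol : ∀ d : V → ℝ, (∑ a, d a) = 0 → L *ᵥ (Lplus *ᵥ d) = d := by
    intro d hd
    have h0 : L *ᵥ (d - L *ᵥ (Lplus *ᵥ d)) = 0 := by
      rw [Matrix.mulVec_sub, Matrix.mulVec_mulVec, Matrix.mulVec_mulVec, Matrix.mul_assoc, hLLp, sub_self]
    obtain ⟨c, hc⟩ := (hconn _).1 h0
    have hone : L *ᵥ (fun _ => (1 : ℝ)) = 0 := (hconn _).2 ⟨1, rfl⟩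
    have hs : (fun _ => (1 : ℝ)) ⬝ᵥ (d - L *ᵥ (Lplus *ᵥ d)) = 0 := by
      rw [dotProduct_sub, ← hsymm, hone, zero_dotProduct, sub_zero]
      simpa [dotProduct] using hd
    rw [hc] at hs
    haveI : Nonempty V := ⟨u⟩
    have hc0 : c = 0 := by
      simpa [dotProduct] using hs
    rw [hc0] at hc
    exact (sub_eq_zero.1 hc).symm
  have hbdot : ∀ x : V → ℝ, B f ⬝ᵥ x = x u - x v := by
    intro x
    rw [hBf]
    simp [dotProduct, sub_mul, Finset.sum_sub_distrib]
  have hbsum : (∑ a, B f a) = 0 := by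
    have := hbdot (fun _ => 1)
    simpa [dotProduct] using this
  have hPT : ∀ (y : V' → ℝ) (a : V), (Pᵀ *ᵥ y) a = y (φ a) := by
    intro y a
    rw [hP]
    simp [Matrix.mulVec, dotProduct]
  have hPb : P *ᵥ B f = 0 := by
    ext z
    have : (P *ᵥ B f) z = B f ⬝ᵥ P z := by
      rw [dotProduct_comm]; rfl
    rw [this, hbdot, hP]
    simp [hφuv]
  have hbne : B f ⬝ᵥ Lplus *ᵥ (B f) ≠ 0 := by
    intro h
    have hz := hsol (B f) hbsum
    set z := Lplus *ᵥ (B f) with hzdef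
    have hq : ∑ e, w e * (B *ᵥ z) e ^ 2 = 0 := by
      have h5 : z ⬝ᵥ L *ᵥ z = 0 := by rw [hz, dotProduct_comm]; exact h
      rw [hL, ← Matrix.mulVec_mulVec, ← Matrix.mulVec_mulVec, Matrix.dotProduct_mulVec,
        Matrix.vecMul_transpose] at h5
      rw [← h5]
      simp only [dotProduct, Matrix.mulVec_diagonal]
      exact Finset.sum_congr rfl fun e _ => by ring
    have hBz : B *ᵥ z = 0 := by
      ext e
      have := (Finset.sum_eq_zero_iff_of_nonneg
        (fun e _ => mul_nonneg (hw e).le (sq_nonneg _))).1 hq e (Finset.mem_univ e)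
      simpa [(hw e).ne'] using this
    have hb0 : B f = 0 := by
      rw [← hz, hL, ← Matrix.mulVec_mulVec, hBz, Matrix.mulVec_zero]
    have := congrFun hb0 u
    rw [hBf] at this
    simp [huv] at this
  have key : ∀ d : V → ℝ, (∑ a, d a) = 0 → ∃ y : V' → ℝ,
      Pᵀ *ᵥ y = Lplus *ᵥ d -
        ((B f ⬝ᵥ Lplus *ᵥ d) / (B f ⬝ᵥ Lplus *ᵥ (B f))) • Lplus *ᵥ (B f) ∧
      Lc *ᵥ y = P *ᵥ d := by
    intro d hd
    set α := (B f ⬝ᵥ Lplus *ᵥ d) / (B f ⬝ᵥ Lplus *ᵥ (B f)) with hα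
    set x := Lplus *ᵥ d - α • Lplus *ᵥ (B f) with hx
    have hbx : x u = x v := by
      rw [← sub_eq_zero, ← hbdot, hx, dotProduct_sub, dotProduct_smul, smul_eq_mul, hα,
        div_mul_cancel₀ _ hbne, sub_self]
    have hy : Pᵀ *ᵥ (fun z => x (Function.surjInv hsurj z)) = x := by
      ext a
      rw [hPT]
      rcases hφinj _ _ (Function.surjInv_eq hsurj (φ a)) with h | ⟨h, h'⟩ | ⟨h, h'⟩
      · rw [h]
      · rw [h, hbx, h']
      · rw [h, ← hbx, h']
    refine ⟨_, hy, ?_⟩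
    rw [hLc, ← Matrix.mulVec_mulVec, ← Matrix.mulVec_mulVec, hy, hx, Matrix.mulVec_sub,
      Matrix.mulVec_smul, hsol d hd, hsol _ hbsum, Matrix.mulVec_sub, Matrix.mulVec_smul, hPb,
      smul_zero, sub_zero]
  intro d₁ d₂ hd₁ hd₂
  obtain ⟨y₁, -, hy₁⟩ := key d₁ hd₁
  obtain ⟨y₂, hx₂, hy₂⟩ := key d₂ hd₂
  have e1 : P *ᵥ d₁ ⬝ᵥ Lcplus *ᵥ (P *ᵥ d₂) = P *ᵥ d₁ ⬝ᵥ y₂ := by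
    rw [← hy₁, ← hy₂, hsymmc, hsymmc, Matrix.mulVec_mulVec, Matrix.mulVec_mulVec,
      k1]
  rw [e1, ← Matrix.vecMul_transpose, ← Matrix.dotProduct_mulVec, hx₂, dotProduct_sub,
    dotProduct_smul, smul_eq_mul]
  ring
end

section
/- Let S ⊆ V with k := |S| ≥ 2, fix s₀ ∈ S, and let C ∈ ℝ^{V×(k−1)} be the matrix whose columns are the vectors e_{s₀} − e_s for s ∈ S∖{s₀} (the signed indicator vectors of the edges of a star on S centered at s₀). Then the (k−1)×(k−1) matrix N := Cᵀ L_G⁺ C is symmetric positive definite, and for every vector b ∈ ℝ^V with bᵀ1 = 0, the supremum over all nonzero x ∈ ℝ^V supported on S with xᵀ1 = 0 of (xᵀ L_G⁺ b)² / (xᵀ L_G⁺ x) equals bᵀ L_G⁺ C N⁻¹ Cᵀ L_G⁺ b. (Moreover xᵀ L_G⁺ x > 0 for every such x, so the quotient is well defined.) -/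
open Matrix BigOperators

lemma mp_symm {ι : Type*} [Fintype ι] [DecidableEq ι] {A P : Matrix ι ι ℝ}
    (hA : Aᵀ = A) (h : IsMoorePenrose A P) : Pᵀ = P ∧ A * P = P * A := by
  obtain ⟨h1, h2, h3, h4⟩ := h
  rw [transpose_mul, hA] at h3 h4
  have h5 : A * Pᵀ * A = A := by
    have := congrArg transpose h1
    simpa [transpose_mul, hA, Matrix.mul_assoc] using this
  have h6 : Pᵀ * A * Pᵀ = Pᵀ := by
    have := congrArg transpose h2
    simpa [transpose_mul, hA, Matrix.mul_assoc] using this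
  have e1 : A * P = (P * A) * (A * P) := by
    rw [← h4, ← Matrix.mul_assoc, h5]
  have e2 : A * P = (A * P) * (P * A) := by
    have := congrArg transpose e1
    simpa [transpose_mul, hA, h3, h4] using this
  have e3 : A * P = P * A := by
    rw [e2, ← h4, ← Matrix.mul_assoc, h1]
  refine ⟨?_, e3⟩
  calc Pᵀ = Pᵀ * A * Pᵀ := h6.symm
    _ = P * A * Pᵀ := by rw [h3, e3]
    _ = P * (P * A) := by rw [Matrix.mul_assoc, h4]
    _ = P * A * P := by rw [Matrix.mul_assoc P A P, e3]
    _ = P := h2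

lemma quad_sup {ι : Type*} [Fintype ι] [DecidableEq ι] [Nonempty ι] (N : Matrix ι ι ℝ)
    (hNs : Nᵀ = N) (hpos : ∀ y : ι → ℝ, y ≠ 0 → 0 < y ⬝ᵥ N.mulVec y)
    (g z : ι → ℝ) (hz : N.mulVec z = g) :
    IsGreatest {t : ℝ | ∃ y : ι → ℝ, y ≠ 0 ∧ t = (y ⬝ᵥ g) ^ 2 / (y ⬝ᵥ N.mulVec y)}
      (z ⬝ᵥ g) := by
  have sym : ∀ u v : ι → ℝ, u ⬝ᵥ N.mulVec v = v ⬝ᵥ N.mulVec u := by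
    intro u v
    rw [dotProduct_mulVec, ← mulVec_transpose, hNs, dotProduct_comm]
  subst hz
  constructor
  · by_cases h : z = 0
    · refine ⟨fun _ => 1, ?_, by simp [h]⟩
      intro h0
      obtain ⟨i⟩ := ‹Nonempty ι›
      simpa using congrFun h0 i
    · refine ⟨z, h, ?_⟩
      have := hpos z h
      field_simp
  · rintro t ⟨y, hy, rfl⟩
    have ha := hpos y hy
    set a := y ⬝ᵥ N.mulVec y with haa
    set d := y ⬝ᵥ N.mulVec z with hd
    have hn : 0 ≤ (z - (d / a) • y) ⬝ᵥ N.mulVec (z - (d / a) • y) := by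
      by_cases h : z - (d / a) • y = 0
      · simp [h]
      · exact (hpos _ h).le
    simp only [mulVec_sub, mulVec_smul, sub_dotProduct, dotProduct_sub, smul_dotProduct,
      dotProduct_smul, smul_eq_mul] at hn
    rw [sym z y, ← haa, ← hd] at hn
    have : d / a * (d / a * a) = d ^ 2 / a := by field_simp
    have h2 : d / a * d = d ^ 2 / a := by ring
    linarith

theorem stmt_12
    {V : Type*} {E : Type*} [Fintype V] [DecidableEq V] [Fintype E] [DecidableEq E]
    [Nonempty E]
    (w : E → ℝ) (hw : ∀ e, 0 < w e)
    (B : Matrix E V ℝ)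
    (hB : ∀ e : E, ∃ u v : V, u ≠ v ∧
      B e = fun x => (if x = u then (1 : ℝ) else 0) - (if x = v then 1 else 0))
    (L : Matrix V V ℝ) (hL : L = Bᵀ * Matrix.diagonal w * B)
    (hconn : ∀ x : V → ℝ, L.mulVec x = 0 ↔ ∃ c : ℝ, x = fun _ => c)
    (Lplus : Matrix V V ℝ) (hLplus : IsMoorePenrose L Lplus)
    (S : Finset V) (k : ℕ) (hk : k = S.card) (hk2 : 2 ≤ k)
    (s₀ : V) (hs₀ : s₀ ∈ S)
    (C : Matrix V {s // s ∈ S.erase s₀} ℝ)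
    (hC : C = Matrix.of fun (x : V) (s : {s // s ∈ S.erase s₀}) =>
      (if x = s₀ then (1 : ℝ) else 0) - (if x = s.1 then 1 else 0))
    (N : Matrix {s // s ∈ S.erase s₀} {s // s ∈ S.erase s₀} ℝ)
    (hN : N = Cᵀ * Lplus * C) :
    N.PosDef ∧
    (∀ x : V → ℝ, x ≠ 0 → (∀ a, a ∉ S → x a = 0) → (∑ a, x a) = 0 →
      0 < x ⬝ᵥ Lplus.mulVec x) ∧
    ∀ b : V → ℝ, (∑ a, b a) = 0 →
      sSup {t : ℝ | ∃ x : V → ℝ, x ≠ 0 ∧ (∀ a, a ∉ S → x a = 0) ∧ (∑ a, x a) = 0 ∧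
          t = (x ⬝ᵥ Lplus.mulVec b) ^ 2 / (x ⬝ᵥ Lplus.mulVec x)} =
        b ⬝ᵥ (Lplus * C * N⁻¹ * Cᵀ * Lplus).mulVec b := by
  have hLs : Lᵀ = L := by
    rw [hL]; simp [transpose_mul, Matrix.mul_assoc]
  obtain ⟨hPs, hcomm⟩ := mp_symm hLs hLplus
  obtain ⟨h1, h2, -, -⟩ := hLplus
  have sym : ∀ u v : V → ℝ, u ⬝ᵥ Lplus.mulVec v = v ⬝ᵥ Lplus.mulVec u := by
    intro u v
    rw [dotProduct_mulVec, ← mulVec_transpose, hPs, dotProduct_comm]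
  have proj : ∀ x : V → ℝ, (∑ a, x a) = 0 → L.mulVec (Lplus.mulVec x) = x := by
    intro x hx
    have hk0 : L.mulVec (x - L.mulVec (Lplus.mulVec x)) = 0 := by
      rw [mulVec_sub, mulVec_mulVec, mulVec_mulVec, Matrix.mul_assoc, hcomm, ← Matrix.mul_assoc, h1, sub_self]
    obtain ⟨c, hc⟩ := (hconn _).1 hk0
    have hone : L.mulVec (fun _ => (1 : ℝ)) = 0 := (hconn _).2 ⟨1, rfl⟩
    have hs : (fun _ => (1 : ℝ)) ⬝ᵥ (x - L.mulVec (Lplus.mulVec x)) = 0 := by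
      rw [dotProduct_sub, dotProduct_mulVec, ← mulVec_transpose, hLs, hone, zero_dotProduct]
      simp [dotProduct, hx]
    rw [hc] at hs
    simp [dotProduct] at hs
    have hc0 : c = 0 := by
      rcases hs with hs | hs
      · exact ((Fintype.card_pos_iff.2 ⟨s₀⟩).ne' hs).elim
      · exact hs
    have : x - L.mulVec (Lplus.mulVec x) = 0 := by rw [hc, hc0]; rfl
    exact (sub_eq_zero.1 this).symm
  have hpos : ∀ x : V → ℝ, x ≠ 0 → (∑ a, x a) = 0 → 0 < x ⬝ᵥ Lplus.mulVec x := by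
    intro x hx0 hx
    set y := Lplus.mulVec x with hy
    have e : x ⬝ᵥ y = ∑ e, w e * (B.mulVec y e) ^ 2 := by
      have e1 : x ⬝ᵥ y = y ⬝ᵥ L.mulVec y := by
        rw [hy, proj x hx, dotProduct_comm]
      rw [e1, hL, ← mulVec_mulVec, ← mulVec_mulVec, dotProduct_mulVec, vecMul_transpose]
      simp only [dotProduct, mulVec_diagonal]
      exact Finset.sum_congr rfl fun e _ => by ring
    have hnn : ∀ e ∈ Finset.univ, 0 ≤ w e * (B.mulVec y e) ^ 2 :=
      fun e _ => mul_nonneg (hw e).le (sq_nonneg _)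
    rw [e]
    refine lt_of_le_of_ne (Finset.sum_nonneg hnn) fun h0 => hx0 ?_
    have hz := (Finset.sum_eq_zero_iff_of_nonneg hnn).1 h0.symm
    have hBy : B.mulVec y = 0 := by
      funext e
      have := hz e (Finset.mem_univ _)
      simpa [(hw e).ne'] using this
    rw [← proj x hx, ← hy, hL, ← mulVec_mulVec, hBy, mulVec_zero]
  have hCv : ∀ (y : {s // s ∈ S.erase s₀} → ℝ) (a : V), C.mulVec y a =
      (if a = s₀ then ∑ s, y s else 0) - ∑ s, (if a = s.1 then y s else 0) := by
    intro y a
    rw [hC]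
    simp only [mulVec, dotProduct, of_apply, sub_mul, Finset.sum_sub_distrib, ite_mul, one_mul,
      zero_mul]
    congr 1
    split_ifs <;> simp
  have hCne : ∀ (y : {s // s ∈ S.erase s₀} → ℝ) (s : {s // s ∈ S.erase s₀}),
      C.mulVec y s.1 = - y s := by
    intro y s
    have hne : s.1 ≠ s₀ := (Finset.mem_erase.1 s.2).1
    rw [hCv, if_neg hne]
    simp
  have hCsupp : ∀ (y : {s // s ∈ S.erase s₀} → ℝ) (a : V), a ∉ S → C.mulVec y a = 0 := by
    intro y a ha
    rw [hCv, if_neg (show ¬ a = s₀ from fun h => ha (h ▸ hs₀)), Finset.sum_eq_zero, sub_zero]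
    intro s _
    rw [if_neg]
    intro h
    exact ha (h ▸ (Finset.mem_erase.1 s.2).2)
  have hCsum : ∀ (y : {s // s ∈ S.erase s₀} → ℝ), ∑ a, C.mulVec y a = 0 := by
    intro y
    simp only [hCv, Finset.sum_sub_distrib]
    rw [Finset.sum_comm (s := Finset.univ (α := V))]
    simp
  have hCn0 : ∀ (y : {s // s ∈ S.erase s₀} → ℝ), y ≠ 0 → C.mulVec y ≠ 0 := by
    intro y hy h
    apply hy
    funext s
    have := hCne y s
    rw [h] at this
    simpa using this
  have hCsurj : ∀ x : V → ℝ, (∀ a, a ∉ S → x a = 0) → (∑ a, x a) = 0 →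
      C.mulVec (fun s => - x s.1) = x := by
    intro x hxs hx
    have hoff : ∀ a, a ≠ s₀ → C.mulVec (fun s => - x s.1) a = x a := by
      intro a ha
      by_cases haS : a ∈ S
      · have := hCne (fun s => - x s.1) ⟨a, Finset.mem_erase.2 ⟨ha, haS⟩⟩
        simpa using this
      · rw [hCsupp _ _ haS, hxs _ haS]
    funext a
    by_cases ha : a = s₀
    · subst ha
      have h3 := hCsum (fun s => - x s.1)
      rw [← Finset.add_sum_erase _ _ (Finset.mem_univ a)] at h3 hx
      rw [Finset.sum_congr rfl (fun b hb => hoff b (Finset.mem_erase.1 hb).1)] at h3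
      linarith
    · exact hoff a ha
  have hNq : ∀ y : {s // s ∈ S.erase s₀} → ℝ,
      C.mulVec y ⬝ᵥ Lplus.mulVec (C.mulVec y) = y ⬝ᵥ N.mulVec y := by
    intro y
    rw [hN, ← mulVec_mulVec, ← mulVec_mulVec, dotProduct_mulVec y, vecMul_transpose]
  have hNpos : ∀ y : {s // s ∈ S.erase s₀} → ℝ, y ≠ 0 → 0 < y ⬝ᵥ N.mulVec y := by
    intro y hy
    rw [← hNq]
    exact hpos _ (hCn0 y hy) (hCsum y)
  have hNs : Nᵀ = N := by
    rw [hN]; simp [transpose_mul, Matrix.mul_assoc, hPs]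
  have hPD : N.PosDef := by
    refine Matrix.PosDef.of_dotProduct_mulVec_pos ?_ ?_
    · rw [Matrix.IsHermitian, conjTranspose_eq_transpose_of_trivial, hNs]
    · intro y hy
      simpa using hNpos y hy
  refine ⟨hPD, fun x hx _ hs => hpos x hx hs, ?_⟩
  intro b hb
  have hne : Nonempty {s // s ∈ S.erase s₀} := by
    have : 0 < (S.erase s₀).card := by
      rw [Finset.card_erase_of_mem hs₀]; omega
    obtain ⟨a, ha⟩ := Finset.card_pos.1 this
    exact ⟨⟨a, ha⟩⟩
  have hgz : N.mulVec (N⁻¹.mulVec (Cᵀ.mulVec (Lplus.mulVec b))) =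
      Cᵀ.mulVec (Lplus.mulVec b) := by
    rw [mulVec_mulVec, Matrix.mul_nonsing_inv _ ((Matrix.isUnit_iff_isUnit_det _).1 hPD.isUnit),
      one_mulVec]
  have hmain := quad_sup N hNs hNpos _ _ hgz
  have hyg : ∀ y : {s // s ∈ S.erase s₀} → ℝ,
      C.mulVec y ⬝ᵥ Lplus.mulVec b = y ⬝ᵥ Cᵀ.mulVec (Lplus.mulVec b) := by
    intro y
    rw [dotProduct_mulVec y, vecMul_transpose]
  have hval : b ⬝ᵥ (Lplus * C * N⁻¹ * Cᵀ * Lplus).mulVec b =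
      N⁻¹.mulVec (Cᵀ.mulVec (Lplus.mulVec b)) ⬝ᵥ Cᵀ.mulVec (Lplus.mulVec b) := by
    rw [← hyg, ← mulVec_mulVec, ← mulVec_mulVec, ← mulVec_mulVec, ← mulVec_mulVec, sym]
  rw [hval, ← hmain.csSup_eq]
  congr 1
  ext t
  constructor
  · rintro ⟨x, hx0, hxs, hx, rfl⟩
    refine ⟨fun s => - x s.1, ?_, ?_⟩
    · intro h
      apply hx0
      rw [← hCsurj x hxs hx, h, mulVec_zero]
    · rw [← hyg, ← hNq, hCsurj x hxs hx]
  · rintro ⟨y, hy, rfl⟩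
    exact ⟨C.mulVec y, hCn0 y hy, hCsupp y, hCsum y, by rw [hyg, hNq]⟩
end

section
/- Let S ⊆ V with |S| ≥ 2, let V' be the vertex set obtained from V by identifying all vertices of S to a single vertex, and let P ∈ ℝ^{V'×V} be the 0–1 matrix with P_{z,y} = 1 if and only if z is the image of y under this identification. Let L_{G/S} := P L_G Pᵀ (the Laplacian of the graph G/S obtained by identifying S to a single vertex), with Moore–Penrose pseudoinverse (L_{G/S})⁺. Then for every edge e ∈ E, the decrease in effective resistance satisfies: b_eᵀ L_G⁺ b_e − (P b_e)ᵀ (L_{G/S})⁺ (P b_e) = the supremum over all nonzero x ∈ ℝ^V supported on S with xᵀ1 = 0 of (xᵀ L_G⁺ b_e)² / (xᵀ L_G⁺ x). -/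
open Matrix BigOperators

lemma mp_solve {ι : Type*} [Fintype ι] [DecidableEq ι] (A C : Matrix ι ι ℝ) (hA : Aᵀ = A)
    (h : IsMoorePenrose A C) (v : ι → ℝ) (hv : ∀ k, A.mulVec k = 0 → k ⬝ᵥ v = 0) :
    A.mulVec (C.mulVec v) = v := by
  obtain ⟨h1, -, h3, -⟩ := h
  have h4 : A * (A * C) = A := by
    have := congrArg Matrix.transpose h1
    rw [Matrix.transpose_mul, h3, hA] at this
    exact this
  set r := v - A.mulVec (C.mulVec v) with hr
  have hAr : A.mulVec r = 0 := by
    rw [hr, Matrix.mulVec_sub, Matrix.mulVec_mulVec, Matrix.mulVec_mulVec, Matrix.mul_assoc, h4, sub_self]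
  have hrr : r ⬝ᵥ r = 0 := by
    conv_lhs => rw [hr]
    rw [← hr, dotProduct_comm]
    conv_lhs => arg 2; rw [hr]
    rw [dotProduct_sub, hv r hAr, Matrix.dotProduct_mulVec, ← Matrix.mulVec_transpose, hA, hAr]
    simp
  have := dotProduct_self_eq_zero.mp hrr
  rw [hr, sub_eq_zero] at this
  exact this.symm

lemma psd_cs {ι : Type*} [Fintype ι] [DecidableEq ι] (A : Matrix ι ι ℝ) (hA : Aᵀ = A)
    (hn : ∀ x, 0 ≤ x ⬝ᵥ A.mulVec x) (u v : ι → ℝ) :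
    (u ⬝ᵥ A.mulVec v) ^ 2 ≤ (u ⬝ᵥ A.mulVec u) * (v ⬝ᵥ A.mulVec v) := by
  have hs : v ⬝ᵥ A.mulVec u = u ⬝ᵥ A.mulVec v := by
    rw [Matrix.dotProduct_mulVec, ← Matrix.mulVec_transpose, hA, dotProduct_comm]
  have key : ∀ t : ℝ, 0 ≤ (u ⬝ᵥ A.mulVec u) * (t * t) + (2 * (u ⬝ᵥ A.mulVec v)) * t
      + v ⬝ᵥ A.mulVec v := by
    intro t
    have := hn (t • u + v)
    simp only [Matrix.mulVec_add, Matrix.mulVec_smul, dotProduct_add, add_dotProduct,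
      smul_dotProduct, dotProduct_smul, smul_eq_mul, hs] at this
    linarith
  have := discrim_le_zero key
  unfold discrim at this
  linarith

theorem stmt_13
    {V : Type*} {E : Type*} {V' : Type*}
    [Fintype V] [DecidableEq V] [Fintype E] [DecidableEq E] [Fintype V'] [DecidableEq V']
    [Nonempty E]
    (w : E → ℝ) (hw : ∀ e, 0 < w e)
    (B : Matrix E V ℝ)
    (hB : ∀ e : E, ∃ u v : V, u ≠ v ∧
      B e = fun x => (if x = u then (1 : ℝ) else 0) - (if x = v then 1 else 0))
    (L : Matrix V V ℝ) (hL : L = Bᵀ * Matrix.diagonal w * B)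
    (hconn : ∀ x : V → ℝ, L.mulVec x = 0 ↔ ∃ c : ℝ, x = fun _ => c)
    (Lplus : Matrix V V ℝ) (hLplus : IsMoorePenrose L Lplus)
    (S : Finset V) (hS2 : 2 ≤ S.card)
    (φ : V → V') (hsurj : Function.Surjective φ)
    (hid : ∀ a ∈ S, ∀ b ∈ S, φ a = φ b)
    (hinj : ∀ a b : V, φ a = φ b → a = b ∨ (a ∈ S ∧ b ∈ S))
    (P : Matrix V' V ℝ)
    (hP : P = Matrix.of fun (z : V') (y : V) => if z = φ y then (1 : ℝ) else 0)
    (LGS : Matrix V' V' ℝ) (hLGS : LGS = P * L * Pᵀ)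
    (LGSplus : Matrix V' V' ℝ) (hLGSplus : IsMoorePenrose LGS LGSplus) :
    ∀ e : E,
      B e ⬝ᵥ Lplus.mulVec (B e) -
          P.mulVec (B e) ⬝ᵥ LGSplus.mulVec (P.mulVec (B e)) =
        sSup {t : ℝ | ∃ x : V → ℝ, x ≠ 0 ∧ (∀ a, a ∉ S → x a = 0) ∧ (∑ a, x a) = 0 ∧
          t = (x ⬝ᵥ Lplus.mulVec (B e)) ^ 2 / (x ⬝ᵥ Lplus.mulVec x)} := by
  intro e
  have hsymL : Lᵀ = L := by
    rw [hL]; simp [Matrix.transpose_mul, Matrix.mul_assoc]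
  have hmv : ∀ x y : V → ℝ, x ⬝ᵥ L.mulVec y = L.mulVec x ⬝ᵥ y := by
    intro x y
    rw [Matrix.dotProduct_mulVec, ← Matrix.mulVec_transpose, hsymL]
  have hquad : ∀ x : V → ℝ, x ⬝ᵥ L.mulVec x = ∑ e, w e * (B.mulVec x e) ^ 2 := by
    intro x
    rw [hL, ← Matrix.mulVec_mulVec, ← Matrix.mulVec_mulVec, Matrix.dotProduct_mulVec,
      Matrix.vecMul_transpose]
    simp only [dotProduct, Matrix.mulVec_diagonal]
    exact Finset.sum_congr rfl fun i _ => by ring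
  have hnn : ∀ x : V → ℝ, 0 ≤ x ⬝ᵥ L.mulVec x := by
    intro x
    rw [hquad]
    exact Finset.sum_nonneg fun i _ => mul_nonneg (hw i).le (sq_nonneg _)
  have hzero : ∀ x : V → ℝ, x ⬝ᵥ L.mulVec x = 0 → L.mulVec x = 0 := by
    intro x hx
    have h := psd_cs L hsymL hnn (L.mulVec x) x
    rw [hx, mul_zero] at h
    have h2 : L.mulVec x ⬝ᵥ L.mulVec x = 0 := by
      have := sq_nonneg (L.mulVec x ⬝ᵥ L.mulVec x)
      exact pow_eq_zero_iff (two_ne_zero) |>.mp (le_antisymm h this)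
    exact dotProduct_self_eq_zero.mp h2
  have hsolve : ∀ x : V → ℝ, ∑ a, x a = 0 → L.mulVec (Lplus.mulVec x) = x := by
    intro x hx
    refine mp_solve L Lplus hsymL hLplus x ?_
    intro k hk
    obtain ⟨c, rfl⟩ := (hconn k).mp hk
    simp [dotProduct, ← Finset.mul_sum, hx]
  have hb : ∑ a, B e a = 0 := by
    obtain ⟨u, v, -, h⟩ := hB e
    rw [h]; simp
  generalize B e = b at hb ⊢
  have hPT : ∀ (k : V' → ℝ) (a : V), Pᵀ.mulVec k a = k (φ a) := by
    intro k a
    simp [hP, Matrix.mulVec, dotProduct]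
  have hPk : ∀ (k : V' → ℝ) (x : V → ℝ), k ⬝ᵥ P.mulVec x = Pᵀ.mulVec k ⬝ᵥ x := by
    intro k x
    rw [Matrix.dotProduct_mulVec, ← Matrix.mulVec_transpose]
  have hsymS : LGSᵀ = LGS := by
    rw [hLGS]; simp [Matrix.transpose_mul, Matrix.mul_assoc, hsymL]
  have hSmv : ∀ k, LGS.mulVec k = P.mulVec (L.mulVec (Pᵀ.mulVec k)) := by
    intro k
    rw [hLGS, ← Matrix.mulVec_mulVec, ← Matrix.mulVec_mulVec]
  have hz : LGS.mulVec (LGSplus.mulVec (P.mulVec b)) = P.mulVec b := by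
    refine mp_solve LGS LGSplus hsymS hLGSplus _ ?_
    intro k hk
    rw [hPk]
    have h0 : L.mulVec (Pᵀ.mulVec k) = 0 := by
      apply hzero
      rw [← hPk, ← hSmv, hk, dotProduct_zero]
    obtain ⟨c, hc⟩ := (hconn _).mp h0
    rw [hc]
    simp [dotProduct, ← Finset.mul_sum, hb]
  set z := LGSplus.mulVec (P.mulVec b) with hzdef
  set y := Lplus.mulVec b with hy
  have hLy : L.mulVec y = b := hsolve b hb
  set q := Pᵀ.mulVec z with hq
  set g := L.mulVec (y - q) with hg
  have hPg : P.mulVec g = 0 := by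
    rw [hg, Matrix.mulVec_sub, hLy, Matrix.mulVec_sub, ← hSmv, hz, sub_self]
  obtain ⟨s₀, hs₀, s₁, hs₁, hne⟩ := Finset.one_lt_card.mp hS2
  have hqx : ∀ x : V → ℝ, (∀ a, a ∉ S → x a = 0) → ∑ a, x a = 0 → q ⬝ᵥ x = 0 := by
    intro x hx hx0
    have : q ⬝ᵥ x = ∑ a, z (φ s₀) * x a := by
      refine Finset.sum_congr rfl fun a _ => ?_
      by_cases ha : a ∈ S
      · rw [hq, hPT, hid a ha s₀ hs₀]
      · simp [hx a ha]
    rw [this, ← Finset.mul_sum, hx0, mul_zero]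
  have hgS : ∀ a, a ∉ S → g a = 0 := by
    intro a ha
    have h := congrFun hPg (φ a)
    refine Eq.trans ?_ h
    simp only [hP, Matrix.mulVec, dotProduct, Matrix.of_apply, ite_mul, one_mul, zero_mul]
    rw [Finset.sum_eq_single a]
    · simp
    · intro c _ hc
      rw [if_neg]
      intro h'
      rcases hinj a c h' with h'' | h''
      · exact hc h''.symm
      · exact ha h''.1
    · simp
  have hg0 : ∑ a, g a = 0 := by
    have h1 : L.mulVec (fun _ => (1:ℝ)) = 0 := (hconn _).mpr ⟨1, rfl⟩
    have h2 := hmv (fun _ => (1:ℝ)) (y - q)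
    rw [h1, zero_dotProduct] at h2
    simpa [dotProduct] using h2
  have hD : b ⬝ᵥ y - P.mulVec b ⬝ᵥ z = (y - q) ⬝ᵥ L.mulVec (y - q) := by
    rw [dotProduct_comm (P.mulVec b), hPk, ← hg, sub_dotProduct, hqx g hgS hg0, sub_zero, hg, hmv,
      hLy, dotProduct_sub, dotProduct_comm q]
  have hxy : ∀ x : V → ℝ, (∀ a, a ∉ S → x a = 0) → ∑ a, x a = 0 →
      x ⬝ᵥ y = x ⬝ᵥ (y - q) := by
    intro x hx hx0
    rw [dotProduct_sub, dotProduct_comm x q, hqx x hx hx0, sub_zero]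
  rw [hD]
  set D := (y - q) ⬝ᵥ L.mulVec (y - q) with hDdef
  have hup : ∀ x : V → ℝ, (∀ a, a ∉ S → x a = 0) → ∑ a, x a = 0 →
      (x ⬝ᵥ y) ^ 2 ≤ D * (x ⬝ᵥ Lplus.mulVec x) ∧ 0 ≤ x ⬝ᵥ Lplus.mulVec x := by
    intro x hx hx0
    have hu := hsolve x hx0
    have h1 : x ⬝ᵥ Lplus.mulVec x = Lplus.mulVec x ⬝ᵥ L.mulVec (Lplus.mulVec x) := by
      rw [hu, dotProduct_comm]
    have h2 : x ⬝ᵥ y = Lplus.mulVec x ⬝ᵥ L.mulVec (y - q) := by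
      rw [hxy x hx hx0, hmv, hu]
    rw [h1, h2, mul_comm]
    exact ⟨psd_cs L hsymL hnn _ _, hnn _⟩
  have hle : ∀ x : V → ℝ, (∀ a, a ∉ S → x a = 0) → ∑ a, x a = 0 →
      (x ⬝ᵥ y) ^ 2 / (x ⬝ᵥ Lplus.mulVec x) ≤ D := by
    intro x hx hx0
    obtain ⟨h1, h2⟩ := hup x hx hx0
    exact div_le_of_le_mul₀ h2 (hnn _) h1
  symm
  apply IsGreatest.csSup_eq
  constructor
  · by_cases hgz : g = 0
    · have hD0 : D = 0 := by rw [hDdef, ← hg, hgz, dotProduct_zero]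
      have hx1 : ∀ a, a ∉ S → (Pi.single s₀ (1:ℝ) - Pi.single s₁ 1 : V → ℝ) a = 0 := by
        intro a ha
        have h1 : a ≠ s₀ := fun h => ha (h ▸ hs₀)
        have h2 : a ≠ s₁ := fun h => ha (h ▸ hs₁)
        simp [h1, h2]
      have hx2 : ∑ a, (Pi.single s₀ (1:ℝ) - Pi.single s₁ 1 : V → ℝ) a = 0 := by simp
      refine ⟨Pi.single s₀ 1 - Pi.single s₁ 1, ?_, hx1, hx2, ?_⟩
      · intro h
        have := congrFun h s₀
        simp [hne] at this
      · apply le_antisymm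
        · rw [hD0]
          exact div_nonneg (sq_nonneg _) (hup _ hx1 hx2).2
        · exact hle _ hx1 hx2
    · refine ⟨g, hgz, hgS, hg0, ?_⟩
      have h1 : g ⬝ᵥ y = D := by
        rw [hxy g hgS hg0, dotProduct_comm]
      have h2 : g ⬝ᵥ Lplus.mulVec g = D := by
        conv_lhs => rw [hg]
        rw [← hmv, ← hg, hsolve g hg0]
      rw [h1, h2]
      have : D ≠ 0 := fun h => hgz (hzero _ h)
      field_simp
  · rintro t ⟨x, -, hx, hx0, rfl⟩
    exact hle x hx hx0
end

section
/- Let E be a finite set with |E| = m ≥ 1, let M : E × E → ℝ be symmetric (M(e,f) = M(f,e)) with all values nonnegative, and suppose Σ_{e∈E} Σ_{f∈E} M(e,f) ≤ K·m for some K > 0. Then for every γ ∈ (0,1) there exists a subset W ⊆ E with: (i) |W| ≥ (γ/4)·m, and (ii) for every e ∈ W, Σ_{f∈W, f≠e} M(e,f) ≤ 100·K·γ. -/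
open BigOperators

theorem aux_greedy {E : Type*} [Fintype E] [DecidableEq E]
    (N : E → E → ℝ) (hsymm : ∀ e f, N e f = N f e) (hd : ∀ e, N e e = 0)
    (K : ℝ) (hsum : (∑ e, ∑ f, N e f) ≤ K * Fintype.card E) (hm : 1 ≤ Fintype.card E) :
    ∀ j k : ℕ, k + j = Fintype.card E → ∃ S : Finset E, S.card = k ∧
      ((Fintype.card E : ℝ) - 1) * (∑ e ∈ S, ∑ f ∈ S, N e f) ≤ K * k * (k - 1) := by
  have hm' : (0 : ℝ) ≤ (Fintype.card E : ℝ) - 1 := by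
    have : (1 : ℝ) ≤ (Fintype.card E : ℝ) := by exact_mod_cast hm
    linarith
  intro j
  induction j with
  | zero =>
    intro k hk
    refine ⟨Finset.univ, by simpa using hk.symm, ?_⟩
    have hk' : k = Fintype.card E := by simpa using hk
    subst hk'
    have := mul_le_mul_of_nonneg_left hsum hm'
    linarith
  | succ j ih =>
    intro k hk
    rcases Nat.eq_zero_or_pos k with h0 | hpos
    · subst h0
      exact ⟨∅, by simp, by simp⟩
    obtain ⟨S, hS, hT⟩ := ih (k + 1) (by omega)
    have hne : S.Nonempty := by
      rw [← Finset.card_pos]; omega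
    obtain ⟨e, he, hmax⟩ := S.exists_max_image (fun e => ∑ f ∈ S, N e f) hne
    have h1 : (∑ e ∈ S, ∑ f ∈ S, N e f) ≤ (k + 1) * ∑ f ∈ S, N e f := by
      have := Finset.sum_le_card_nsmul S _ _ hmax
      rw [hS, nsmul_eq_mul] at this
      push_cast at this
      exact this
    refine ⟨S.erase e, by rw [Finset.card_erase_of_mem he]; omega, ?_⟩
    have h2 : ∀ g, ∑ f ∈ S, N g f = N g e + ∑ f ∈ S.erase e, N g f := fun g =>
      (Finset.add_sum_erase S (fun f => N g f) he).symm
    have h3 : (∑ g ∈ S, ∑ f ∈ S, N g f) =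
        2 * (∑ f ∈ S, N e f) + ∑ g ∈ S.erase e, ∑ f ∈ S.erase e, N g f := by
      rw [← Finset.add_sum_erase S (fun g => ∑ f ∈ S, N g f) he]
      simp only [h2, Finset.sum_add_distrib, hd]
      have : ∑ g ∈ S.erase e, N g e = ∑ g ∈ S.erase e, N e g :=
        Finset.sum_congr rfl fun g _ => hsymm g e
      rw [this]; ring
    generalize (∑ g ∈ S, ∑ f ∈ S, N g f) = T at *
    generalize (∑ g ∈ S.erase e, ∑ f ∈ S.erase e, N g f) = T' at *
    generalize (∑ f ∈ S, N e f) = r at *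
    have hk1 : (1 : ℝ) ≤ k := by exact_mod_cast hpos
    push_cast at hT
    have h4 : (k + 1) * T' ≤ (k - 1) * T := by subst h3; linarith
    have h5 := mul_le_mul_of_nonneg_left h4 hm'
    have h6 := mul_le_mul_of_nonneg_left hT (sub_nonneg.2 hk1)
    have h7 : (0 : ℝ) < k + 1 := by linarith
    refine le_of_mul_le_mul_left ?_ h7
    linarith

theorem stmt_14 {E : Type*} [Fintype E] [DecidableEq E]
    (m : ℕ) (hm : m = Fintype.card E) (hm1 : 1 ≤ m)
    (M : E → E → ℝ) (hsymm : ∀ e f, M e f = M f e) (hnonneg : ∀ e f, 0 ≤ M e f)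
    (K : ℝ) (hK : 0 < K) (hsum : (∑ e, ∑ f, M e f) ≤ K * m)
    (γ : ℝ) (hγ0 : 0 < γ) (hγ1 : γ < 1) :
    ∃ W : Finset E, γ / 4 * m ≤ W.card ∧
      ∀ e ∈ W, (∑ f ∈ W.erase e, M e f) ≤ 100 * K * γ := by
  by_cases hsmall : γ / 4 * m ≤ 1
  · have : 0 < Fintype.card E := by omega
    obtain ⟨e⟩ := Fintype.card_pos_iff.1 this
    refine ⟨{e}, by simpa using hsmall, ?_⟩
    intro f hf
    rw [Finset.mem_singleton] at hf
    subst hf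
    simp
    positivity
  push Not at hsmall
  have hmR : (1 : ℝ) ≤ m := by exact_mod_cast hm1
  have hm4 : (4 : ℝ) < m := by nlinarith
  set N : E → E → ℝ := fun e f => if e = f then 0 else M e f with hN
  have hN0 : ∀ e f, 0 ≤ N e f := by
    intro e f; simp only [hN]; split_ifs
    · exact le_rfl
    · exact hnonneg e f
  have hNM : ∀ e f, N e f ≤ M e f := by
    intro e f; simp only [hN]; split_ifs
    · exact hnonneg e f
    · exact le_rfl
  have hNs : (∑ e, ∑ f, N e f) ≤ K * Fintype.card E := by
    rw [← hm]
    exact (Finset.sum_le_sum fun e _ => Finset.sum_le_sum fun f _ => hNM e f).trans hsum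
  set k := ⌈γ * m / 2⌉₊ with hk
  have hk1 : γ * m / 2 ≤ k := Nat.le_ceil _
  have hk2 : (k : ℝ) < γ * m / 2 + 1 := Nat.ceil_lt_add_one (by positivity)
  have hkm : k ≤ m := Nat.ceil_le.2 (by nlinarith)
  obtain ⟨S, hS, hT⟩ := aux_greedy N (by intro e f; simp only [hN, hsymm e f, eq_comm])
    (by intro e; simp [hN]) K hNs (by omega) (m - k) k (by omega)
  rw [← hm] at hT
  set T := ∑ e ∈ S, ∑ f ∈ S, N e f with hTd
  let B := S.filter (fun e => 100 * K * γ < ∑ f ∈ S, N e f)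
  let W := S.filter (fun e => ¬ 100 * K * γ < ∑ f ∈ S, N e f)
  have hcard : B.card + W.card = k := by
    rw [← hS]; exact Finset.card_filter_add_card_filter_not _
  have hB : (B.card : ℝ) * (100 * K * γ) ≤ T := by
    rw [← nsmul_eq_mul]
    refine (Finset.card_nsmul_le_sum B (fun e => ∑ f ∈ S, N e f) _ ?_).trans ?_
    · intro e he; exact (Finset.mem_filter.1 he).2.le
    · exact Finset.sum_le_sum_of_subset_of_nonneg (Finset.filter_subset _ _)
        fun e _ _ => Finset.sum_nonneg fun f _ => hN0 e f
  refine ⟨W, ?_, ?_⟩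
  · have hcR : (B.card : ℝ) + W.card = k := by exact_mod_cast hcard
    have hBk : (B.card : ℝ) * 100 ≤ k := by
      have a1 : ((m : ℝ) - 1) * (B.card * (100 * K * γ)) ≤ K * k * (γ * m / 2) :=
        (mul_le_mul_of_nonneg_left hB (by linarith)).trans (hT.trans
          (mul_le_mul_of_nonneg_left (by linarith) (by positivity)))
      have a2 : (m : ℝ) / 2 * (B.card * (100 * K * γ)) ≤ ((m : ℝ) - 1) * (B.card * (100 * K * γ)) :=
        mul_le_mul_of_nonneg_right (by linarith) (by positivity)
      have a3 : (0 : ℝ) < K * γ * m / 2 := by positivity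
      refine le_of_mul_le_mul_left ?_ a3
      linarith
    linarith
  · intro e he
    have h1 := not_lt.1 (Finset.mem_filter.1 he).2
    refine le_trans ?_ h1
    calc ∑ f ∈ W.erase e, M e f = ∑ f ∈ W.erase e, N e f := by
          refine Finset.sum_congr rfl fun f hf => ?_
          have := (Finset.mem_erase.1 hf).1
          simp [hN, this.symm]
      _ ≤ _ := Finset.sum_le_sum_of_subset_of_nonneg
          ((Finset.erase_subset _ _).trans (Finset.filter_subset _ _)) fun f _ _ => hN0 e f
end

section
/- Let f ∈ E be an edge with leverage score lev(f) := (b_fᵀ L_G⁺ b_f)/r_f < 1, and let L' := L_G − (1/r_f)·b_f b_fᵀ (the Laplacian of G with f deleted), with Moore–Penrose pseudoinverse (L')⁺. Then for every edge e ∈ E with e ≠ f and every x ∈ ℝ^V with xᵀ1 = 0: |xᵀ (L')⁺ b_e| / √r_e ≤ |xᵀ L_G⁺ b_e| / √r_e + (1/(1 − lev(f))) · (|xᵀ L_G⁺ b_f| / √r_f) · (|b_fᵀ L_G⁺ b_e| / (√r_f·√r_e)). -/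
open Matrix BigOperators

theorem stmt_16
    {V : Type*} {E : Type*} [Fintype V] [DecidableEq V] [Fintype E] [DecidableEq E]
    [Nonempty E]
    (w : E → ℝ) (hw : ∀ e, 0 < w e)
    (B : Matrix E V ℝ)
    (hB : ∀ e : E, ∃ u v : V, u ≠ v ∧
      B e = fun x => (if x = u then (1 : ℝ) else 0) - (if x = v then 1 else 0))
    (L : Matrix V V ℝ) (hL : L = Bᵀ * Matrix.diagonal w * B)
    (hconn : ∀ x : V → ℝ, L.mulVec x = 0 ↔ ∃ c : ℝ, x = fun _ => c)
    (Lplus : Matrix V V ℝ) (hLplus : IsMoorePenrose L Lplus)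
    (f : E) (rf : ℝ) (hrf : rf = 1 / w f)
    (lev : ℝ) (hlevdef : lev = (B f ⬝ᵥ Lplus.mulVec (B f)) / rf) (hlev : lev < 1)
    (L' : Matrix V V ℝ) (hL' : L' = L - (1 / rf) • Matrix.vecMulVec (B f) (B f))
    (L'plus : Matrix V V ℝ) (hL'plus : IsMoorePenrose L' L'plus) :
    ∀ e : E, e ≠ f → ∀ x : V → ℝ, (∑ a, x a) = 0 →
      |x ⬝ᵥ L'plus.mulVec (B e)| / Real.sqrt (1 / w e) ≤
        |x ⬝ᵥ Lplus.mulVec (B e)| / Real.sqrt (1 / w e) +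
          (1 / (1 - lev)) * (|x ⬝ᵥ Lplus.mulVec (B f)| / Real.sqrt rf) *
            (|B f ⬝ᵥ Lplus.mulVec (B e)| / (Real.sqrt rf * Real.sqrt (1 / w e))) := by
  have hrf0 : 0 < rf := by rw [hrf]; exact one_div_pos.mpr (hw f)
  have hLs : Lᵀ = L := by
    rw [hL]; simp [Matrix.transpose_mul, Matrix.mul_assoc]
  have hL's : L'ᵀ = L' := by
    rw [hL', Matrix.transpose_sub, hLs, Matrix.transpose_smul, Matrix.transpose_vecMulVec]
  obtain ⟨h1, -, h3, -⟩ := hLplus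
  obtain ⟨k1, -, -, k4⟩ := hL'plus
  have hLL : L * (L * Lplus) = L := by
    have := congrArg Matrix.transpose h1
    rwa [Matrix.transpose_mul, h3, hLs] at this
  have hBs : ∀ e, ∑ a, B e a = 0 := by
    intro e
    obtain ⟨u, v, -, h⟩ := hB e
    rw [h]; simp
  have hL1 : L.mulVec (fun _ => (1 : ℝ)) = 0 := (hconn _).2 ⟨1, rfl⟩
  have key : ∀ b : V → ℝ, (∑ a, b a) = 0 → L.mulVec (Lplus.mulVec b) = b := by
    intro b hb
    have hz : L.mulVec (b - L.mulVec (Lplus.mulVec b)) = 0 := by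
      rw [Matrix.mulVec_sub, Matrix.mulVec_mulVec, Matrix.mulVec_mulVec,
        Matrix.mul_assoc, hLL, sub_self]
    obtain ⟨c, hc⟩ := (hconn _).1 hz
    have hs : (fun _ => (1 : ℝ)) ⬝ᵥ (b - L.mulVec (Lplus.mulVec b)) = 0 := by
      rw [dotProduct_sub, Matrix.dotProduct_mulVec, ← Matrix.mulVec_transpose, hLs, hL1]
      simp [dotProduct, hb]
    have hcard : c = 0 := by
      obtain ⟨u, -⟩ := hB f
      rw [hc] at hs
      simp only [dotProduct, one_mul, Finset.sum_const, nsmul_eq_mul] at hs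
      rcases mul_eq_zero.1 hs with h | h
      · have hne : (Finset.univ : Finset V).card ≠ 0 :=
          Finset.card_ne_zero_of_mem (Finset.mem_univ u)
        exact absurd h (by exact_mod_cast hne)
      · exact h
    have : b - L.mulVec (Lplus.mulVec b) = 0 := by rw [hc, hcard]; rfl
    exact (sub_eq_zero.1 this).symm
  have hl : 0 < 1 - lev := by linarith
  have hlev' : B f ⬝ᵥ Lplus.mulVec (B f) = lev * rf := by
    rw [hlevdef]; field_simp
  have sol : ∀ b : V → ℝ, (∑ a, b a) = 0 → L'.mulVec (Lplus.mulVec b +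
      ((B f ⬝ᵥ Lplus.mulVec b) / (rf * (1 - lev))) • Lplus.mulVec (B f)) = b := by
    intro b hb
    rw [hL', Matrix.sub_mulVec, Matrix.smul_mulVec, Matrix.vecMulVec_mulVec,
      Matrix.mulVec_add, Matrix.mulVec_smul, key b hb, key (B f) (hBs f),
      dotProduct_add, dotProduct_smul, hlev']
    ext a
    simp
    field_simp
    ring
  have hP : L'plus * L' * L' = L' := by
    have := congrArg Matrix.transpose k1
    rwa [Matrix.mul_assoc, Matrix.transpose_mul, k4, hL's] at this
  have proj : ∀ b : V → ℝ, (∑ a, b a) = 0 → (L'plus * L').mulVec b = b := by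
    intro b hb
    conv_lhs => rw [← sol b hb]
    rw [Matrix.mulVec_mulVec, hP, sol b hb]
  intro e _ x hx
  have main : x ⬝ᵥ L'plus.mulVec (B e) = x ⬝ᵥ Lplus.mulVec (B e) +
      ((B f ⬝ᵥ Lplus.mulVec (B e)) / (rf * (1 - lev))) * (x ⬝ᵥ Lplus.mulVec (B f)) := by
    conv_lhs => rw [← sol (B e) (hBs e)]
    rw [Matrix.mulVec_mulVec, Matrix.dotProduct_mulVec, ← Matrix.mulVec_transpose, k4, proj x hx,
      dotProduct_add, dotProduct_smul, smul_eq_mul]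
  have hre : 0 < Real.sqrt (1 / w e) := Real.sqrt_pos.2 (one_div_pos.mpr (hw e))
  have hsf : 0 < Real.sqrt rf := Real.sqrt_pos.2 hrf0
  have hsq : Real.sqrt rf * Real.sqrt rf = rf := Real.mul_self_sqrt hrf0.le
  rw [main]
  generalize Real.sqrt (1 / w e) = s at *
  generalize Real.sqrt rf = t at *
  have hR : (1 / (1 - lev)) * (|x ⬝ᵥ Lplus.mulVec (B f)| / t) *
            (|B f ⬝ᵥ Lplus.mulVec (B e)| / (t * s)) =
      |((B f ⬝ᵥ Lplus.mulVec (B e)) / (rf * (1 - lev))) * (x ⬝ᵥ Lplus.mulVec (B f))| / s := by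
    rw [abs_mul, abs_div, abs_of_pos (mul_pos hrf0 hl), ← hsq]
    field_simp
  rw [hR, ← add_div]
  exact div_le_div_of_nonneg_right (abs_add_le _ _) hre.le
end
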